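/- Let A be a free abelian group of finite rank (a finitely generated free ℤ-module), and let S be a subgroup (ℤ-submodule) of A such that the quotient A⧸S is torsion-free and S has rank at least 2. Then for every element χ ∈ A there exists s ∈ S such that: (i) s is indivisible in A, i.e. whenever s = n • a with n ∈ ℤ and a ∈ A, one has n = 1 or n = −1; and (ii) s is not an integer multiple of χ, i.e. s ≠ k • χ for every k ∈ ℤ. -/

import Mathlib

/-! A submodule `S` with torsion-free quotient contains `y` as soon as it contains `r • y` with `r`
regular, so a linear functional on `S` with value `1` at `x = r • y` can be evaluated at `y` and
shows that `r` is a unit. This applies to the elements of a basis of `S`, so `S` is spanned by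
elements that are indivisible in the ambient module. If all of these were multiples of `χ`, then
`S` would be contained in the span of `χ` and have rank at most one. -/

section IsIndivisible

open Module Submodule

variable {R M : Type*} [CommRing R] [AddCommGroup M] [Module R M]

variable (R) in
/-- An element `x` of an `R`-module is indivisible if `x = r • y` only for units `r`; over `ℤ` these
are the primitive elements of an abelian group. All factorizations are considered, including
`0 = 0 • 0`, so `0` is not indivisible over a nontrivial ring. -/
def IsIndivisible (x : M) : Prop :=
  ∀ ⦃r : R⦄ ⦃y : M⦄, x = r • y → IsUnit r

theorem isRegular_of_torsionOf_smul_eq_bot {r : R} {y : M}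
    (h : Ideal.torsionOf R M (r • y) = ⊥) : IsRegular r := by
  refine isRegular_iff_mem_nonZeroDivisors.2 (mem_nonZeroDivisors_iff_right.2 fun c hc => ?_)
  rw [← Ideal.mem_bot, ← h, Ideal.mem_torsionOf_iff, smul_smul, hc, zero_smul]

theorem torsionOf_eq_bot_of_apply_eq_one {f : M →ₗ[R] R} {x : M} (hf : f x = 1) :
    Ideal.torsionOf R M x = ⊥ := by
  refine (Submodule.eq_bot_iff _).2 fun c hc => ?_
  simpa [hf] using congrArg f ((Ideal.mem_torsionOf_iff x c).1 hc)

theorem torsionOf_coe {S : Submodule R M} (x : S) :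
    Ideal.torsionOf R M x = Ideal.torsionOf R S x := by
  ext c
  simp only [Ideal.mem_torsionOf_iff, ← coe_smul, ZeroMemClass.coe_eq_zero]

theorem isIndivisible_coe_of_apply_eq_one {S : Submodule R M} [IsTorsionFree R (M ⧸ S)]
    {f : S →ₗ[R] R} {x : S} (hf : f x = 1) : IsIndivisible R (x : M) := by
  intro r y hxy
  have hr : IsRegular r := isRegular_of_torsionOf_smul_eq_bot (y := y) <| by
    rw [← hxy, torsionOf_coe, torsionOf_eq_bot_of_apply_eq_one hf]
  have hy : y ∈ S := mem_of_isSMulRegular_quotient_of_smul_mem hr.isSMulRegular (hxy ▸ x.2)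
  have hx : x = r • (⟨y, hy⟩ : S) := Subtype.ext hxy
  refine .of_mul_eq_one (f ⟨y, hy⟩) ?_
  rw [← smul_eq_mul, ← map_smul, ← hx, hf]

theorem span_setOf_mem_and_isIndivisible (S : Submodule R M) [Free R S]
    [IsTorsionFree R (M ⧸ S)] : span R {x | x ∈ S ∧ IsIndivisible R x} = S := by
  refine le_antisymm (span_le.2 fun x hx => hx.1) ?_
  let b := Free.chooseBasis R S
  rw [← comap_subtype_eq_top, eq_top_iff, ← b.span_eq, span_le]
  rintro _ ⟨i, rfl⟩
  have hb : b.coord i (b i) = 1 := by simp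
  exact subset_span ⟨(b i).2, isIndivisible_coe_of_apply_eq_one hb⟩

theorem exists_primitive_not_multiple_general (S : Submodule R M) [Free R S]
    [IsTorsionFree R (M ⧸ S)] (hS : 1 < Module.rank R S) (χ : M) :
    ∃ s ∈ S, IsIndivisible R s ∧ s ∉ span R {χ} := by
  have : Nontrivial R := by
    by_contra! h
    exact hS.ne' (rank_subsingleton R S)
  by_contra! h
  have hle : S ≤ span R {χ} := by
    rw [← span_setOf_mem_and_isIndivisible S, span_le]
    exact fun s hs => h s hs.1 hs.2
  exact hS.not_ge ((rank_submodule_le_one_iff' S).2 ⟨χ, hle⟩)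

end IsIndivisible

/-- If `A` is a finitely generated free abelian group (free `ℤ`-module of finite rank)
and `S` is a submodule with torsion-free quotient `A ⧸ S` and rank at least `2`, then
for every `χ ∈ A` there is an element `s ∈ S` which is indivisible in `A` and is not
an integer multiple of `χ`. -/
theorem exists_primitive_not_multiple (A : Type*) [AddCommGroup A]
    [Module.Free ℤ A] [Module.Finite ℤ A] (S : Submodule ℤ A)
    (htf : NoZeroSMulDivisors ℤ (A ⧸ S)) (hrk : 2 ≤ Module.finrank ℤ S) (χ : A) :
    ∃ s ∈ S, (∀ (n : ℤ) (a : A), s = n • a → n = 1 ∨ n = -1) ∧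
      ∀ k : ℤ, s ≠ k • χ := by
  obtain ⟨s, hsS, hs, hsχ⟩ :=
    exists_primitive_not_multiple_general S (by exact_mod_cast Module.lt_rank_of_lt_finrank hrk) χ
  exact ⟨s, hsS, fun _ _ h => Int.isUnit_iff.1 (hs h),
    fun k hk => hsχ (Submodule.mem_span_singleton.2 ⟨k, hk.symm⟩)⟩
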